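/- There exists a constant C > 0, depending only on L (in particular independent of k), such that for every k ∈ ℤ and every smooth L-periodic function w: | ∫₀^L (Ψ_k w)''(x) w'(x) dx | ≤ C ‖w‖_{1,2} ( ∫₀^L w'(x)² dx )^{1/2}. Moreover ∫₀^L (Ψ_k w)''(x) w'(x) dx = ∫₀^L Ψ_k''(x) w(x) w'(x) dx + (3/2) ∫₀^L Ψ_k'(x) w'(x)² dx. -/

import Mathlib

/-!
Write `a = 2πk/L`. Since `c_k² (1 + a² + a⁴) = 2/L`, both `c_k |a|` and `c_k a²` are at most
`√(2/L)`, so `Ψ_k'` and `Ψ_k''` are bounded by `√(2/L)` uniformly in `k`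
(`abs_deriv_psi_le`, `abs_deriv_deriv_psi_le`).

The identity holds because the difference of the two integrands is the exact derivative
`(1/2) (Ψ_k w'²)'` of a periodic function (`pairing_identity`). The estimate then follows from the
identity by Cauchy–Schwarz (`sq_integral_mul_le`), with `C = (5/2) √(2/L)`.
-/

open MeasureTheory

noncomputable section

/-- The normalizing constants `c_k = sqrt(2 / (L (1 + (2πk/L)² + (2πk/L)⁴)))`. -/
def cL (L : ℝ) (k : ℤ) : ℝ :=
  Real.sqrt (2 / (L * (1 + (2 * Real.pi * (k : ℝ) / L) ^ 2
    + (2 * Real.pi * (k : ℝ) / L) ^ 4)))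

/-- The trigonometric basis functions `Ψ_k` on the torus `𝕋_L`. -/
def psi (L : ℝ) (k : ℤ) : ℝ → ℝ := fun x =>
  if 0 < k then cL L k * Real.cos (2 * Real.pi * (k : ℝ) * x / L)
  else if k = 0 then cL L 0 / Real.sqrt 2
  else cL L k * Real.sin (2 * Real.pi * (k : ℝ) * x / L)

/-- `‖u‖₂²  = ∫₀^L u²`. -/
def norm2sq (L : ℝ) (u : ℝ → ℝ) : ℝ := ∫ x in (0 : ℝ)..L, (u x) ^ 2

/-- `‖u‖_{1,2}² = ∫₀^L (u² + u'²)`. -/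
def norm12sq (L : ℝ) (u : ℝ → ℝ) : ℝ :=
  ∫ x in (0 : ℝ)..L, ((u x) ^ 2 + (deriv u x) ^ 2)

/-- `‖u‖_{2,2}² = ∫₀^L (u² + u'² + u''²)`. -/
def norm22sq (L : ℝ) (u : ℝ → ℝ) : ℝ :=
  ∫ x in (0 : ℝ)..L, ((u x) ^ 2 + (deriv u x) ^ 2 + (deriv (deriv u) x) ^ 2)

/-- The operator `A^ε u = (1/2) Σ_k λ_k² ∂_x(Ψ_k ∂_x(Ψ_k u)) + ε ∂_x² u`. -/
def Aop (L : ℝ) (lam : ℤ → ℝ) (ε : ℝ) (u : ℝ → ℝ) : ℝ → ℝ := fun x =>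
  (1 / 2) * (∑' k : ℤ,
      (lam k) ^ 2 * deriv (fun y => psi L k y * deriv (fun z => psi L k z * u z) y) x)
    + ε * deriv (deriv u) x

/-- Cauchy–Schwarz for interval integrals of continuous functions: the quadratic
`t ↦ ∫ (t f + g)²` is nonnegative, so its discriminant is nonpositive. -/
theorem sq_integral_mul_le {L : ℝ} (hL : 0 < L) {f g : ℝ → ℝ} (hf : Continuous f)
    (hg : Continuous g) :
    (∫ x in (0 : ℝ)..L, f x * g x) ^ 2
      ≤ (∫ x in (0 : ℝ)..L, (f x) ^ 2) * ∫ x in (0 : ℝ)..L, (g x) ^ 2 := by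
  have key : ∀ t : ℝ, 0 ≤ (∫ x in (0 : ℝ)..L, (f x) ^ 2) * (t * t)
      + (2 * ∫ x in (0 : ℝ)..L, f x * g x) * t + ∫ x in (0 : ℝ)..L, (g x) ^ 2 := by
    intro t
    have h0 : 0 ≤ ∫ x in (0 : ℝ)..L, (t * f x + g x) ^ 2 :=
      intervalIntegral.integral_nonneg hL.le fun x _ => sq_nonneg _
    have h1 : (∫ x in (0 : ℝ)..L, (t * f x + g x) ^ 2)
        = ∫ x in (0 : ℝ)..L, ((t * t) * (f x) ^ 2 + (2 * t) * (f x * g x) + (g x) ^ 2) := by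
      congr 1
      ext x
      ring
    rw [h1, intervalIntegral.integral_add, intervalIntegral.integral_add,
      intervalIntegral.integral_const_mul, intervalIntegral.integral_const_mul] at h0
    · linarith
    all_goals exact Continuous.intervalIntegrable (by fun_prop) _ _
  have := discrim_le_zero key
  rw [discrim] at this
  linarith

theorem contDiff_psi (L : ℝ) (k : ℤ) : ContDiff ℝ (⊤ : ℕ∞) (psi L k) := by
  unfold psi
  split_ifs <;> fun_prop

theorem psi_periodic {L : ℝ} (hL : 0 < L) (k : ℤ) (x : ℝ) : psi L k (x + L) = psi L k x := by
  have h : 2 * Real.pi * (k : ℝ) * (x + L) / L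
      = 2 * Real.pi * (k : ℝ) * x / L + k * (2 * Real.pi) := by
    field_simp
  simp only [psi, h, Real.cos_add_int_mul_two_pi, Real.sin_add_int_mul_two_pi]

theorem deriv_const_mul_cos (c a : ℝ) :
    deriv (fun x => c * Real.cos (a * x)) = fun x => (-(c * a)) * Real.sin (a * x) := by
  ext x
  have h := ((Real.hasDerivAt_cos (a * x)).comp x ((hasDerivAt_id x).const_mul a)).const_mul c
  refine (HasDerivAt.deriv h).trans ?_
  ring

theorem deriv_const_mul_sin (c a : ℝ) :
    deriv (fun x => c * Real.sin (a * x)) = fun x => (c * a) * Real.cos (a * x) := by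
  ext x
  have h := ((Real.hasDerivAt_sin (a * x)).comp x ((hasDerivAt_id x).const_mul a)).const_mul c
  refine (HasDerivAt.deriv h).trans ?_
  ring

theorem psi_cases (L : ℝ) (k : ℤ) :
    psi L k = (fun x => cL L k * Real.cos (2 * Real.pi * (k : ℝ) / L * x))
      ∨ psi L k = (fun _ => cL L 0 / Real.sqrt 2)
      ∨ psi L k = (fun x => cL L k * Real.sin (2 * Real.pi * (k : ℝ) / L * x)) := by
  have h (x : ℝ) : 2 * Real.pi * (k : ℝ) * x / L = 2 * Real.pi * (k : ℝ) / L * x := by ring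
  unfold psi
  simp only [h]
  split_ifs
  · exact Or.inl rfl
  · exact Or.inr (Or.inl rfl)
  · exact Or.inr (Or.inr rfl)

/-- A multiplier `b` with `b² ≤ 1 + a² + a⁴`, `a = 2πk/L`, is absorbed by `c_k`; it is used
with `b = a` and `b = a²`. -/
theorem abs_cL_mul_le {L : ℝ} (hL : 0 < L) (k : ℤ) {b : ℝ}
    (hb : b ^ 2 ≤ 1 + (2 * Real.pi * (k : ℝ) / L) ^ 2 + (2 * Real.pi * (k : ℝ) / L) ^ 4) :
    |cL L k * b| ≤ Real.sqrt (2 / L) := by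
  apply Real.abs_le_sqrt
  have hp : 0 < 1 + (2 * Real.pi * (k : ℝ) / L) ^ 2 + (2 * Real.pi * (k : ℝ) / L) ^ 4 := by
    positivity
  unfold cL
  rw [mul_pow, Real.sq_sqrt (by positivity), ← div_div, div_mul_eq_mul_div, div_le_iff₀ hp]
  gcongr

theorem abs_mul_le_of_abs_le_one {u v M : ℝ} (hu : |u| ≤ M) (hv : |v| ≤ 1) : |u * v| ≤ M := by
  rw [abs_mul]
  exact (mul_le_of_le_one_right (abs_nonneg u) hv).trans hu

theorem abs_deriv_psi_le {L : ℝ} (hL : 0 < L) (k : ℤ) (x : ℝ) :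
    |deriv (psi L k) x| ≤ Real.sqrt (2 / L) := by
  have hc := abs_cL_mul_le hL k (b := 2 * Real.pi * (k : ℝ) / L) (by
    have := sq_nonneg ((2 * Real.pi * (k : ℝ) / L) ^ 2)
    nlinarith)
  rcases psi_cases L k with h | h | h
  · rw [h, deriv_const_mul_cos]
    exact abs_mul_le_of_abs_le_one (by rwa [abs_neg]) (Real.abs_sin_le_one _)
  · rw [h, deriv_const, abs_zero]
    positivity
  · rw [h, deriv_const_mul_sin]
    exact abs_mul_le_of_abs_le_one hc (Real.abs_cos_le_one _)

theorem abs_deriv_deriv_psi_le {L : ℝ} (hL : 0 < L) (k : ℤ) (x : ℝ) :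
    |deriv (deriv (psi L k)) x| ≤ Real.sqrt (2 / L) := by
  have hc := abs_cL_mul_le hL k (b := (2 * Real.pi * (k : ℝ) / L) ^ 2) (by
    have := sq_nonneg (2 * Real.pi * (k : ℝ) / L)
    nlinarith)
  rw [pow_two, ← mul_assoc] at hc
  rcases psi_cases L k with h | h | h
  · rw [h, deriv_const_mul_cos, deriv_const_mul_sin]
    exact abs_mul_le_of_abs_le_one (by rwa [neg_mul, abs_neg]) (Real.abs_cos_le_one _)
  · have h' : deriv (psi L k) = fun _ => 0 := by
      rw [h]
      ext y
      simp
    rw [h', deriv_const, abs_zero]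
    positivity
  · rw [h, deriv_const_mul_sin, deriv_const_mul_cos]
    exact abs_mul_le_of_abs_le_one (by rwa [abs_neg]) (Real.abs_sin_le_one _)

/-- The integration-by-parts identity for an arbitrary smooth periodic multiplier `p`. -/
theorem pairing_identity {L : ℝ} {p w : ℝ → ℝ} (hp : ContDiff ℝ (⊤ : ℕ∞) p)
    (hw : ContDiff ℝ (⊤ : ℕ∞) w) (hpL : ∀ x, p (x + L) = p x) (hwL : ∀ x, w (x + L) = w x) :
    (∫ x in (0 : ℝ)..L, deriv (deriv (fun y => p y * w y)) x * deriv w x)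
      = (∫ x in (0 : ℝ)..L, deriv (deriv p) x * w x * deriv w x)
        + (3 / 2) * ∫ x in (0 : ℝ)..L, deriv p x * (deriv w x) ^ 2 := by
  have hp1 : ContDiff ℝ (⊤ : ℕ∞) (deriv p) := (contDiff_infty_iff_deriv.1 hp).2
  have hp2 : ContDiff ℝ (⊤ : ℕ∞) (deriv (deriv p)) := (contDiff_infty_iff_deriv.1 hp1).2
  have hw1 : ContDiff ℝ (⊤ : ℕ∞) (deriv w) := (contDiff_infty_iff_deriv.1 hw).2
  have hw2 : ContDiff ℝ (⊤ : ℕ∞) (deriv (deriv w)) := (contDiff_infty_iff_deriv.1 hw1).2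
  have dp x : HasDerivAt p (deriv p x) x := ((contDiff_infty_iff_deriv.1 hp).1 x).hasDerivAt
  have dp1 x : HasDerivAt (deriv p) (deriv (deriv p) x) x :=
    ((contDiff_infty_iff_deriv.1 hp1).1 x).hasDerivAt
  have dw x : HasDerivAt w (deriv w x) x := ((contDiff_infty_iff_deriv.1 hw).1 x).hasDerivAt
  have dw1 x : HasDerivAt (deriv w) (deriv (deriv w) x) x :=
    ((contDiff_infty_iff_deriv.1 hw1).1 x).hasDerivAt
  have cp1 := hp1.continuous
  have cp2 := hp2.continuous
  have cp := hp.continuous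
  have cw := hw.continuous
  have cw1 := hw1.continuous
  have cw2 := hw2.continuous
  have e1 : deriv (fun y => p y * w y) = fun y => deriv p y * w y + p y * deriv w y := by
    ext y
    exact ((dp y).mul (dw y)).deriv
  have e2 : ∀ x, deriv (deriv (fun y => p y * w y)) x
      = deriv (deriv p) x * w x + deriv p x * deriv w x
        + (deriv p x * deriv w x + p x * deriv (deriv w) x) := by
    intro x
    rw [e1]
    exact (((dp1 x).mul (dw x)).add ((dp x).mul (dw1 x))).deriv
  have hw1L : deriv w L = deriv w 0 := by
    have h : (fun x => w (x + L)) = w := funext hwL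
    have h2 := deriv_comp_add_const w L 0
    rw [h, zero_add] at h2
    exact h2.symm
  have hpL0 : p L = p 0 := by simpa using hpL 0
  have dG x : HasDerivAt (fun y => p y * (deriv w y) ^ 2)
      (deriv p x * (deriv w x) ^ 2 + 2 * (p x * deriv (deriv w) x * deriv w x)) x := by
    refine ((dp x).mul ((dw1 x).pow 2)).congr_deriv ?_
    simp
    ring
  -- The boundary terms of the exact derivative `(p w'²)'` cancel by periodicity.
  have hG : ∫ x in (0 : ℝ)..L,
      (deriv p x * (deriv w x) ^ 2 + 2 * (p x * deriv (deriv w) x * deriv w x)) = 0 := by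
    rw [intervalIntegral.integral_eq_sub_of_hasDerivAt (fun x _ => dG x)
      (Continuous.intervalIntegrable (by fun_prop) _ _), hw1L, hpL0, sub_self]
  have split : (∫ x in (0 : ℝ)..L, deriv (deriv (fun y => p y * w y)) x * deriv w x)
      = ∫ x in (0 : ℝ)..L, (deriv (deriv p) x * w x * deriv w x
        + (3 / 2) * (deriv p x * (deriv w x) ^ 2)
        + (1 / 2) * (deriv p x * (deriv w x) ^ 2
          + 2 * (p x * deriv (deriv w) x * deriv w x))) := by
    congr 1
    ext x
    rw [e2]
    ring
  rw [split, intervalIntegral.integral_add, intervalIntegral.integral_add,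
    intervalIntegral.integral_const_mul, intervalIntegral.integral_const_mul, hG]
  · ring
  all_goals exact Continuous.intervalIntegrable (by fun_prop) _ _

/-- The estimate for a multiplier `p` whose first two derivatives are bounded by `M`. -/
theorem abs_pairing_le {L M : ℝ} (hL : 0 < L) {p w : ℝ → ℝ} (hp : ContDiff ℝ (⊤ : ℕ∞) p)
    (hw : ContDiff ℝ (⊤ : ℕ∞) w) (hM1 : ∀ x, |deriv p x| ≤ M)
    (hM2 : ∀ x, |deriv (deriv p) x| ≤ M) :
    |(∫ x in (0 : ℝ)..L, deriv (deriv p) x * w x * deriv w x)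
        + (3 / 2) * ∫ x in (0 : ℝ)..L, deriv p x * (deriv w x) ^ 2|
      ≤ (5 / 2 * M) * Real.sqrt (norm12sq L w)
        * Real.sqrt (∫ x in (0 : ℝ)..L, (deriv w x) ^ 2) := by
  have hM : 0 ≤ M := (abs_nonneg _).trans (hM1 0)
  have hp1 : ContDiff ℝ (⊤ : ℕ∞) (deriv p) := (contDiff_infty_iff_deriv.1 hp).2
  have cp1 := hp1.continuous
  have cp2 := (contDiff_infty_iff_deriv.1 hp1).2.continuous
  have cw := hw.continuous
  have cw1 := (contDiff_infty_iff_deriv.1 hw).2.continuous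
  have hN : norm12sq L w
      = (∫ x in (0 : ℝ)..L, (w x) ^ 2) + ∫ x in (0 : ℝ)..L, (deriv w x) ^ 2 := by
    unfold norm12sq
    rw [intervalIntegral.integral_add] <;>
      exact Continuous.intervalIntegrable (by fun_prop) _ _
  have hA : 0 ≤ ∫ x in (0 : ℝ)..L, (w x) ^ 2 :=
    intervalIntegral.integral_nonneg hL.le fun x _ => sq_nonneg _
  have hB : 0 ≤ ∫ x in (0 : ℝ)..L, (deriv w x) ^ 2 :=
    intervalIntegral.integral_nonneg hL.le fun x _ => sq_nonneg _
  have hcs := sq_integral_mul_le hL (f := fun x => deriv (deriv p) x * w x) (g := deriv w)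
    (by fun_prop) cw1
  have hf : (∫ x in (0 : ℝ)..L, (deriv (deriv p) x * w x) ^ 2)
      ≤ M ^ 2 * ∫ x in (0 : ℝ)..L, (w x) ^ 2 := by
    rw [← intervalIntegral.integral_const_mul]
    refine intervalIntegral.integral_mono_on hL.le
      (Continuous.intervalIntegrable (by fun_prop) _ _)
      (Continuous.intervalIntegrable (by fun_prop) _ _) fun x _ => ?_
    rw [mul_pow]
    exact mul_le_mul_of_nonneg_right (sq_le_sq' (abs_le.1 (hM2 x)).1 (abs_le.1 (hM2 x)).2)
      (sq_nonneg _)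
  have hg : |∫ x in (0 : ℝ)..L, deriv p x * (deriv w x) ^ 2|
      ≤ M * ∫ x in (0 : ℝ)..L, (deriv w x) ^ 2 := by
    rw [← intervalIntegral.integral_const_mul]
    refine (intervalIntegral.abs_integral_le_integral_abs hL.le).trans ?_
    refine intervalIntegral.integral_mono_on hL.le
      (Continuous.intervalIntegrable (by fun_prop) _ _)
      (Continuous.intervalIntegrable (by fun_prop) _ _) fun x _ => ?_
    rw [abs_mul, abs_of_nonneg (sq_nonneg (deriv w x))]
    exact mul_le_mul_of_nonneg_right (hM1 x) (sq_nonneg _)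
  rw [hN]
  set A := ∫ x in (0 : ℝ)..L, (w x) ^ 2
  set B := ∫ x in (0 : ℝ)..L, (deriv w x) ^ 2
  have hS : 0 ≤ Real.sqrt (A + B) * Real.sqrt B := by positivity
  have hS2 : (Real.sqrt (A + B) * Real.sqrt B) ^ 2 = (A + B) * B := by
    rw [mul_pow, Real.sq_sqrt (by positivity), Real.sq_sqrt hB]
  have hBS : B ≤ Real.sqrt (A + B) * Real.sqrt B := by
    refine le_of_sq_le_sq ?_ hS
    rw [hS2]
    nlinarith
  have hI : |∫ x in (0 : ℝ)..L, deriv (deriv p) x * w x * deriv w x|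
      ≤ M * (Real.sqrt (A + B) * Real.sqrt B) := by
    refine abs_le_of_sq_le_sq ?_ (by positivity)
    rw [mul_pow, hS2]
    refine hcs.trans ((mul_le_mul_of_nonneg_right hf hB).trans ?_)
    rw [mul_assoc]
    gcongr
    linarith
  have hJ := mul_le_mul_of_nonneg_left hBS hM
  refine (abs_add_le _ _).trans ?_
  rw [abs_mul, abs_of_pos (by norm_num : (0 : ℝ) < 3 / 2)]
  linarith

/-- Uniform-in-`k` estimate and integration-by-parts identity for
`∫₀^L (Ψ_k w)'' w' dx`. -/
theorem psi_second_deriv_pairing_estimate (L : ℝ) (hL : 0 < L) :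
    ∃ C : ℝ, 0 < C ∧
      ∀ k : ℤ, ∀ w : ℝ → ℝ, ContDiff ℝ (⊤ : ℕ∞) w → (∀ x : ℝ, w (x + L) = w x) →
        (|∫ x in (0 : ℝ)..L, deriv (deriv (fun y => psi L k y * w y)) x * deriv w x|
            ≤ C * Real.sqrt (norm12sq L w)
              * Real.sqrt (∫ x in (0 : ℝ)..L, (deriv w x) ^ 2)) ∧
        ((∫ x in (0 : ℝ)..L, deriv (deriv (fun y => psi L k y * w y)) x * deriv w x)
            = (∫ x in (0 : ℝ)..L, deriv (deriv (psi L k)) x * w x * deriv w x)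
              + (3 / 2) * ∫ x in (0 : ℝ)..L, deriv (psi L k) x * (deriv w x) ^ 2) := by
  refine ⟨5 / 2 * Real.sqrt (2 / L), by positivity, fun k w hw hwL => ?_⟩
  have hid := pairing_identity (contDiff_psi L k) hw (psi_periodic hL k) hwL
  refine ⟨?_, hid⟩
  rw [hid]
  exact abs_pairing_le hL (contDiff_psi L k) hw (abs_deriv_psi_le hL k)
    (abs_deriv_deriv_psi_le hL k)

end
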